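/- Under the stated hypotheses, suppose in addition that the convex hull K(σ) of σ does not intersect Σ, and let O be an open (finite or semi-infinite) interval with O ∩ Σ = ∅ such that σ̃ := spec(B) ∩ O is a closed set. If ‖E_A(σ) − E_B(O)‖ < 1, then ‖E_A(σ) − E_B(O)‖ ≤ sin(arctan(‖V‖ / dist(σ̃, Σ))). -/

import Mathlib

/-- `E` is the projection-valued spectral measure of the bounded self-adjoint operator `T`
on the complex Hilbert space `H`: each `E Δ` (for Borel `Δ ⊆ ℝ`) is an orthogonal
projection, `E` is multiplicative and countably additive (in the strong sense), `E ℝ = 1`,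
each `E Δ` commutes with `T`, and on the range of `E Δ` the operator `T` has its
approximate point spectrum inside the closure of `Δ` (which uniquely characterizes the
spectral measure of `T`). -/
structure IsSpectralMeasure {H : Type*} [NormedAddCommGroup H] [InnerProductSpace ℂ H]
    [CompleteSpace H] (T : H →L[ℂ] H) (E : Set ℝ → H →L[ℂ] H) : Prop where
  isSelfAdjoint : ∀ Δ : Set ℝ, MeasurableSet Δ → IsSelfAdjoint (E Δ)
  map_inter : ∀ Δ₁ Δ₂ : Set ℝ, MeasurableSet Δ₁ → MeasurableSet Δ₂ →
    E Δ₁ * E Δ₂ = E (Δ₁ ∩ Δ₂)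
  map_univ : E Set.univ = 1
  countably_additive : ∀ Δ : ℕ → Set ℝ, (∀ n, MeasurableSet (Δ n)) →
    Pairwise (Function.onFun Disjoint Δ) →
    ∀ x : H, HasSum (fun n => E (Δ n) x) (E (⋃ n, Δ n) x)
  commutes : ∀ Δ : Set ℝ, MeasurableSet Δ → Commute T (E Δ)
  spectrum_loc : ∀ Δ : Set ℝ, MeasurableSet Δ → ∀ x : H, E Δ x = x →
    ∀ μ : ℝ, Metric.infDist μ Δ * ‖x‖ ≤ ‖T x - (μ : ℂ) • x‖

/-!
Put `P = E_A(σ)` and `Q = E_B(O)`. Since `‖P - Q‖ < 1`, the projections map `Ran P` and `Ran Q`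
bijectively onto each other, so `‖P - Q‖ = ‖(1 - P) Q‖ =: s` is the sine of the maximal angle `Θ`
between the two ranges.

The interval `O` separates `σ̃ = spec(B) ∩ O` from `Σ`: the former lies in an interval
`[c - r, c + r]`, while `Σ` has distance at least `r + δ` from `c`, where `δ = dist(σ̃, Σ)`. After
subtracting `c` from `A` and `B`, `B` is bounded by `r` on `Ran Q` and `A` is bounded below by
`r + δ` on `Ran (1 - P)`. As `V` has no diagonal part on `Ran (1 - P)`, every `x ∈ Ran Q` satisfies
`A (1 - P) x = (1 - P) Q B x - (1 - P) V P x`, whence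
`(r + δ) ‖(1 - P) x‖ ≤ s r ‖x‖ + ‖V‖ ‖P x‖`. Letting `x` run through unit vectors that are almost
extremal for `s` gives `(r + δ) s ≤ s r + ‖V‖ √(1 - s²)`, that is, `δ tan Θ ≤ ‖V‖`.
-/

open Metric MeasureTheory

theorem isUnit_of_isSelfAdjoint_of_mul_norm_le {𝕜 H : Type*} [RCLike 𝕜] [NormedAddCommGroup H]
    [InnerProductSpace 𝕜 H] [CompleteSpace H] {S : H →L[𝕜] H} (hS : IsSelfAdjoint S) {m : ℝ}
    (hm : 0 < m) (h : ∀ x, m * ‖x‖ ≤ ‖S x‖) : IsUnit S := by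
  lift m to NNReal using hm.le
  suffices IsUnit (S * S) from ((Commute.refl S).isUnit_mul_iff.mp this).1
  refine ContinuousLinearMap.isUnit_of_forall_le_norm_inner_map _ (c := m ^ 2)
    (pow_pos hm 2) fun x => ?_
  have hinner : inner 𝕜 ((S * S) x) x = inner 𝕜 (S x) (S x) := hS.isSymmetric.apply_clm (S x) x
  rw [hinner, inner_self_eq_norm_sq_to_K, norm_pow, RCLike.norm_ofReal, abs_norm, NNReal.coe_pow,
    ← mul_pow, mul_comm]
  gcongr
  exact h x

theorem exists_pos_mul_norm_le_of_isUnit {𝕜 E : Type*} [NontriviallyNormedField 𝕜]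
    [NormedAddCommGroup E] [NormedSpace 𝕜 E] {S : E →L[𝕜] E} (hS : IsUnit S) :
    ∃ m > 0, ∀ x, m * ‖x‖ ≤ ‖S x‖ :=
  antilipschitzWith_iff_exists_mul_le_norm.mp <|
    ContinuousLinearMap.antilipschitz_of_isEmbedding _
      (ContinuousLinearMap.isHomeomorph_of_isUnit hS).isEmbedding

theorem norm_le_of_isSelfAdjoint_of_mul_norm_le {H : Type*} [NormedAddCommGroup H]
    [InnerProductSpace ℂ H] [CompleteSpace H] {S : H →L[ℂ] H} (hS : IsSelfAdjoint S) {r : ℝ}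
    (hr : 0 ≤ r) (h : ∀ (μ : ℝ) (x : H), (|μ| - r) * ‖x‖ ≤ ‖S x - (μ : ℂ) • x‖) : ‖S‖ ≤ r := by
  have mem_spectrum_le : ∀ μ ∈ spectrum ℝ S, |μ| ≤ r := by
    intro μ hμ
    contrapose! hμ
    have hsa : IsSelfAdjoint (algebraMap ℝ (H →L[ℂ] H) μ - S) :=
      (IsSelfAdjoint.algebraMap _ (.all μ)).sub hS
    refine spectrum.notMem_iff.mpr
      (isUnit_of_isSelfAdjoint_of_mul_norm_le hsa (sub_pos.mpr hμ) fun x => ?_)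
    simpa [norm_sub_rev] using h μ x
  cases subsingleton_or_nontrivial (H →L[ℂ] H)
  · rwa [Subsingleton.elim S 0, norm_zero]
  rcases CStarAlgebra.norm_or_neg_norm_mem_spectrum hS with hmem | hmem
  · simpa using mem_spectrum_le _ hmem
  · simpa using mem_spectrum_le _ hmem

section StarProjections

theorem norm_one_sub_mul_le_norm_sub {E : Type*} [NormedRing E] [StarRing E] [CStarRing E]
    {P Q : E} (hQ : IsStarProjection Q) : ‖(1 - P) * Q‖ ≤ ‖P - Q‖ := by
  calc ‖(1 - P) * Q‖ = ‖(Q - P) * Q‖ := by rw [sub_mul, sub_mul, one_mul, hQ.isIdempotentElem.eq]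
    _ ≤ ‖Q - P‖ * ‖Q‖ := norm_mul_le _ _
    _ ≤ ‖P - Q‖ := by
      rw [norm_sub_rev]
      exact mul_le_of_le_one_right (norm_nonneg _) (hQ.norm_le Q)

variable {𝕜 H : Type*} [RCLike 𝕜] [NormedAddCommGroup H] [InnerProductSpace 𝕜 H]
  [CompleteSpace H] {P Q : H →L[𝕜] H}

theorem isStarProjection_apply_apply (hP : IsStarProjection P) (x : H) : P (P x) = P x :=
  congr($(hP.isIdempotentElem.eq) x)

theorem norm_sq_eq_add_of_isStarProjection (hP : IsStarProjection P) (x : H) :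
    ‖x‖ ^ 2 = ‖P x‖ ^ 2 + ‖x - P x‖ ^ 2 := by
  obtain ⟨K, _, rfl⟩ := isStarProjection_iff_eq_starProjection.mp hP
  simpa [Submodule.starProjection_orthogonal'] using K.norm_sq_eq_add_norm_sq_starProjection x

theorem norm_apply_le_of_isStarProjection (hP : IsStarProjection P) (x : H) : ‖P x‖ ≤ ‖x‖ := by
  simpa using P.le_of_opNorm_le (hP.norm_le P) x

theorem mul_norm_le_norm_apply_of_commute (hP : IsStarProjection P) {S : H →L[𝕜] H}
    (hSP : Commute S P) {m : ℝ} (hm : 0 ≤ m) (hran : ∀ x, P x = x → m * ‖x‖ ≤ ‖S x‖)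
    (hker : ∀ x, P x = 0 → m * ‖x‖ ≤ ‖S x‖) (x : H) : m * ‖x‖ ≤ ‖S x‖ := by
  have hPS : P (S x) = S (P x) := congr($(hSP.eq) x).symm
  have h₁ := hran (P x) (isStarProjection_apply_apply hP x)
  have h₂ := hker (x - P x) (by rw [map_sub, isStarProjection_apply_apply hP, sub_self])
  refine le_of_sq_le_sq ?_ (norm_nonneg _)
  calc (m * ‖x‖) ^ 2 = (m * ‖P x‖) ^ 2 + (m * ‖x - P x‖) ^ 2 := by
        rw [mul_pow, norm_sq_eq_add_of_isStarProjection hP x]; ring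
    _ ≤ ‖S (P x)‖ ^ 2 + ‖S (x - P x)‖ ^ 2 := by gcongr
    _ = ‖S x‖ ^ 2 := by
        rw [norm_sq_eq_add_of_isStarProjection hP (S x), hPS, map_sub]

theorem exists_apply_eq_of_norm_sub_lt_one (hP : IsStarProjection P) (hQ : IsStarProjection Q)
    (h : ‖P - Q‖ < 1) {x : H} (hx : P x = x) : ∃ y, Q y = y ∧ P y = x := by
  have hlt : ‖(P - Q) * (P - Q)‖ < 1 :=
    (norm_mul_le _ _).trans_lt (mul_lt_one_of_nonneg_of_lt_one_left (norm_nonneg _) h h.le)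
  have hPQP : P * Q * P = P * (1 - (P - Q) * (P - Q)) := by
    simp only [mul_sub, sub_mul, mul_one, ← mul_assoc, hP.isIdempotentElem.eq,
      hQ.isIdempotentElem.eq]
    abel
  obtain ⟨u, hu⟩ := isUnit_one_sub_of_norm_lt_one hlt
  refine ⟨Q (P ((↑u⁻¹ : H →L[𝕜] H) x)), isStarProjection_apply_apply hQ _, ?_⟩
  calc P (Q (P ((↑u⁻¹ : H →L[𝕜] H) x))) = (P * Q * P * ↑u⁻¹) x := rfl
    _ = x := by rw [hPQP, ← hu, mul_assoc, Units.mul_inv, mul_one, hx]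

/-- `Q : Ran P → Ran Q` is adjoint to `P : Ran Q → Ran P`, which is bijective because
`‖P - Q‖ < 1`, and invertible adjoint operators have the same lower bounds. -/
theorem mul_norm_le_norm_apply_of_norm_sub_lt_one (hP : IsStarProjection P)
    (hQ : IsStarProjection Q) (h : ‖P - Q‖ < 1) {m : ℝ} (hm : 0 ≤ m)
    (hlow : ∀ y, Q y = y → m * ‖y‖ ≤ ‖P y‖) {x : H} (hx : P x = x) : m * ‖x‖ ≤ ‖Q x‖ := by
  obtain ⟨y, hy, rfl⟩ := exists_apply_eq_of_norm_sub_lt_one hP hQ h hx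
  have hinner : inner 𝕜 (P y) (P y) = inner 𝕜 y (Q (P y)) := by
    rw [← hQ.isSelfAdjoint.isSymmetric.apply_clm, hy, hP.isSelfAdjoint.isSymmetric.apply_clm, hx]
  have hsq : ‖P y‖ * ‖P y‖ ≤ ‖y‖ * ‖Q (P y)‖ := by
    rw [← inner_self_eq_norm_mul_norm (𝕜 := 𝕜), hinner]
    exact re_inner_le_norm _ _
  rcases (norm_nonneg (P y)).eq_or_lt with h0 | hpos
  · rw [← h0, mul_zero]; positivity
  refine le_of_mul_le_mul_right ?_ hpos
  calc m * ‖P y‖ * ‖P y‖ = m * (‖P y‖ * ‖P y‖) := mul_assoc _ _ _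
    _ ≤ m * (‖y‖ * ‖Q (P y)‖) := by gcongr
    _ = m * ‖y‖ * ‖Q (P y)‖ := (mul_assoc _ _ _).symm
    _ ≤ ‖P y‖ * ‖Q (P y)‖ := by gcongr; exact hlow y hy
    _ = ‖Q (P y)‖ * ‖P y‖ := mul_comm _ _

theorem norm_sub_apply_le_iff_of_isStarProjection (hP : IsStarProjection P) {s c : ℝ} (hs : 0 ≤ s)
    (hc : 0 ≤ c) (hsc : s ^ 2 + c ^ 2 = 1) (x : H) :
    ‖x - P x‖ ≤ s * ‖x‖ ↔ c * ‖x‖ ≤ ‖P x‖ := by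
  rw [← sq_le_sq₀ (norm_nonneg _) (by positivity), ← sq_le_sq₀ (by positivity) (norm_nonneg _),
    mul_pow, mul_pow, eq_sub_of_add_eq hsc]
  constructor <;> intro h <;> linarith [norm_sq_eq_add_of_isStarProjection hP x]

theorem norm_one_sub_mul_le_norm_one_sub_mul_of_norm_sub_lt_one (hP : IsStarProjection P)
    (hQ : IsStarProjection Q) (h : ‖P - Q‖ < 1) : ‖(1 - Q) * P‖ ≤ ‖(1 - P) * Q‖ := by
  set s := ‖(1 - P) * Q‖
  have hs0 : 0 ≤ s := norm_nonneg _
  have hs1 : s < 1 := (norm_one_sub_mul_le_norm_sub hQ).trans_lt h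
  have hsc : s ^ 2 + √(1 - s ^ 2) ^ 2 = 1 := by
    rw [Real.sq_sqrt (by nlinarith)]; ring
  have hlow : ∀ y, Q y = y → √(1 - s ^ 2) * ‖y‖ ≤ ‖P y‖ := fun y hy => by
    rw [← norm_sub_apply_le_iff_of_isStarProjection hP hs0 (Real.sqrt_nonneg _) hsc]
    simpa [hy] using ((1 - P) * Q).le_opNorm y
  refine ContinuousLinearMap.opNorm_le_bound _ hs0 fun x => ?_
  calc ‖P x - Q (P x)‖ ≤ s * ‖P x‖ := by
        rw [norm_sub_apply_le_iff_of_isStarProjection hQ hs0 (Real.sqrt_nonneg _) hsc]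
        exact mul_norm_le_norm_apply_of_norm_sub_lt_one hP hQ h (Real.sqrt_nonneg _) hlow
          (isStarProjection_apply_apply hP x)
    _ ≤ s * ‖x‖ := by gcongr; exact norm_apply_le_of_isStarProjection hP x

theorem norm_sub_le_max_norm_one_sub_mul (hP : IsStarProjection P) (hQ : IsStarProjection Q) :
    ‖P - Q‖ ≤ max ‖(1 - P) * Q‖ ‖(1 - Q) * P‖ := by
  set s := max ‖(1 - P) * Q‖ ‖(1 - Q) * P‖
  have hs0 : 0 ≤ s := (norm_nonneg _).trans (le_max_left _ _)
  have hPQ : ‖P * (1 - Q)‖ ≤ s := by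
    have hstar : P * (1 - Q) = star ((1 - Q) * P) := by
      simp [hP.isSelfAdjoint.star_eq, hQ.isSelfAdjoint.star_eq]
    rw [hstar, ContinuousLinearMap.star_eq_adjoint, LinearIsometryEquiv.norm_map]
    exact le_max_right _ _
  refine ContinuousLinearMap.opNorm_le_bound _ hs0 fun x => ?_
  have hran : P ((P - Q) x) = (P * (1 - Q)) (x - Q x) := by
    simp [isStarProjection_apply_apply hP, isStarProjection_apply_apply hQ]
  have hker : (P - Q) x - P ((P - Q) x) = -(((1 - P) * Q) (Q x)) := by
    simp [isStarProjection_apply_apply hP, isStarProjection_apply_apply hQ]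
  refine le_of_sq_le_sq ?_ (by positivity)
  calc ‖(P - Q) x‖ ^ 2 = ‖(P * (1 - Q)) (x - Q x)‖ ^ 2 + ‖((1 - P) * Q) (Q x)‖ ^ 2 := by
        rw [norm_sq_eq_add_of_isStarProjection hP, hker, hran, norm_neg]
    _ ≤ (s * ‖x - Q x‖) ^ 2 + (s * ‖Q x‖) ^ 2 := by
        gcongr
        · exact ContinuousLinearMap.le_of_opNorm_le _ hPQ _
        · exact ContinuousLinearMap.le_of_opNorm_le _ (le_max_left _ _) _
    _ = (s * ‖x‖) ^ 2 := by
        rw [mul_pow s ‖x‖, norm_sq_eq_add_of_isStarProjection hQ x]; ring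

theorem norm_sub_eq_norm_one_sub_mul_of_norm_sub_lt_one (hP : IsStarProjection P)
    (hQ : IsStarProjection Q) (h : ‖P - Q‖ < 1) : ‖P - Q‖ = ‖(1 - P) * Q‖ :=
  le_antisymm
    ((norm_sub_le_max_norm_one_sub_mul hP hQ).trans
      (max_le le_rfl (norm_one_sub_mul_le_norm_one_sub_mul_of_norm_sub_lt_one hP hQ h)))
    (norm_one_sub_mul_le_norm_sub hQ)

end StarProjections

section TanTheta

theorem le_sin_arctan_div {s v δ : ℝ} (hs : s ∈ Set.Ioo (-1) 1) (hδ : 0 < δ)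
    (h : δ * s ≤ v * √(1 - s ^ 2)) : s ≤ Real.sin (Real.arctan (v / δ)) := by
  have hsqrt : 0 < √(1 - s ^ 2) := Real.sqrt_pos.mpr (by nlinarith [hs.1, hs.2])
  calc s = Real.sin (Real.arctan (s / √(1 - s ^ 2))) := by
        rw [← Real.arcsin_eq_arctan hs, Real.sin_arcsin hs.1.le hs.2.le]
    _ ≤ Real.sin (Real.arctan (v / δ)) := by
        refine Real.sin_arctan_strictMono.monotone ?_
        rwa [div_le_div_iff₀ hsqrt hδ, mul_comm]

variable {𝕜 H : Type*} [RCLike 𝕜] [NormedAddCommGroup H] [InnerProductSpace 𝕜 H]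
  [CompleteSpace H] {P Q : H →L[𝕜] H}

theorem mul_le_add_sqrt_of_lt_norm_one_sub_mul (hP : IsStarProjection P)
    (hQ : IsStarProjection Q) {a b v t : ℝ} (ha : 0 ≤ a) (hv : 0 ≤ v)
    (h : ∀ x, Q x = x → a * ‖x - P x‖ ≤ b * ‖x‖ + v * ‖P x‖)
    (ht₀ : 0 ≤ t) (ht₁ : t ≤ 1) (ht : t < ‖(1 - P) * Q‖) : a * t ≤ b + v * √(1 - t ^ 2) := by
  obtain ⟨x, hx⟩ : ∃ x, t * ‖x‖ < ‖Q x - P (Q x)‖ := by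
    by_contra! hle
    exact ht.not_ge (ContinuousLinearMap.opNorm_le_bound _ ht₀ hle)
  set y := Q x
  have hty : t * ‖y‖ < ‖y - P y‖ := hx.trans_le' <| by
    gcongr
    exact norm_apply_le_of_isStarProjection hQ x
  have hsqrt : t ^ 2 + √(1 - t ^ 2) ^ 2 = 1 := by
    rw [Real.sq_sqrt (by nlinarith)]; ring
  have hPy : ‖P y‖ < √(1 - t ^ 2) * ‖y‖ := lt_of_not_ge fun hle => hty.not_ge <|
    (norm_sub_apply_le_iff_of_isStarProjection hP ht₀ (Real.sqrt_nonneg _) hsqrt y).mpr hle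
  have hy : 0 < ‖y‖ := pos_of_mul_pos_right ((norm_nonneg _).trans_lt hPy) (Real.sqrt_nonneg _)
  refine le_of_mul_le_mul_right ?_ hy
  calc a * t * ‖y‖ = a * (t * ‖y‖) := mul_assoc _ _ _
    _ ≤ a * ‖y - P y‖ := by gcongr
    _ ≤ b * ‖y‖ + v * ‖P y‖ := h y (isStarProjection_apply_apply hQ x)
    _ ≤ b * ‖y‖ + v * (√(1 - t ^ 2) * ‖y‖) := by gcongr
    _ = (b + v * √(1 - t ^ 2)) * ‖y‖ := by ring

theorem mul_norm_one_sub_mul_le_add_sqrt (hP : IsStarProjection P) (hQ : IsStarProjection Q)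
    {a b v : ℝ} (ha : 0 ≤ a) (hb : 0 ≤ b) (hv : 0 ≤ v)
    (h : ∀ x, Q x = x → a * ‖x - P x‖ ≤ b * ‖x‖ + v * ‖P x‖) :
    a * ‖(1 - P) * Q‖ ≤ b + v * √(1 - ‖(1 - P) * Q‖ ^ 2) := by
  set s := ‖(1 - P) * Q‖
  have hs₁ : s ≤ 1 := ContinuousLinearMap.opNorm_le_bound _ zero_le_one fun x => by
    have hQx := norm_apply_le_of_isStarProjection hQ x
    have hPQx := norm_apply_le_of_isStarProjection hP.one_sub (Q x)
    simpa using hPQx.trans hQx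
  rcases (norm_nonneg ((1 - P) * Q)).eq_or_lt with hs | hs
  · rw [show s = 0 from hs.symm, mul_zero]
    positivity
  have hclosed : IsClosed {t : ℝ | a * t ≤ b + v * √(1 - t ^ 2)} :=
    isClosed_le (by fun_prop) (by fun_prop)
  have hIco : Set.Ico 0 s ⊆ {t : ℝ | a * t ≤ b + v * √(1 - t ^ 2)} := fun t ht =>
    mul_le_add_sqrt_of_lt_norm_one_sub_mul hP hQ ha hv h ht.1 (ht.2.le.trans hs₁) ht.2
  exact closure_minimal hIco hclosed (by rw [closure_Ico hs.ne]; exact ⟨hs.le, le_rfl⟩)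

variable {A V : H →L[𝕜] H} {a r δ : ℝ}

theorem mul_norm_sub_apply_le_add (hP : IsStarProjection P) (hAP : Commute A P)
    (hBQ : Commute (A + V) Q) (hV : (1 - P) * V * (1 - P) = 0)
    (hA : ∀ x, P x = 0 → a * ‖x‖ ≤ ‖A x‖) (hB : ∀ x, Q x = x → ‖(A + V) x‖ ≤ r * ‖x‖)
    {x : H} (hx : Q x = x) :
    a * ‖x - P x‖ ≤ ‖(1 - P) * Q‖ * r * ‖x‖ + ‖V‖ * ‖P x‖ := by
  have hQB : Q ((A + V) x) = (A + V) x := by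
    simpa [hx] using congr($(hBQ.eq) x).symm
  have hVx : (1 - P) (V (x - P x)) = 0 := congr($hV x)
  have hsplit : A (x - P x) = ((1 - P) * Q) ((A + V) x) - (1 - P) (V (P x)) := by
    have hAPx : P (A x) = A (P x) := congr($(hAP.eq) x).symm
    calc A (x - P x) = (1 - P) (A x) + (1 - P) (V (x - P x)) := by
          rw [hVx, add_zero]
          simp [hAPx]
      _ = (1 - P) ((A + V) x) - (1 - P) (V (P x)) := by
        simp only [map_sub, add_apply, map_add]; abel
      _ = ((1 - P) * Q) ((A + V) x) - (1 - P) (V (P x)) := by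
        rw [mul_apply_eq_comp, hQB]
  calc a * ‖x - P x‖ ≤ ‖A (x - P x)‖ :=
        hA _ (by rw [map_sub, isStarProjection_apply_apply hP, sub_self])
    _ ≤ ‖((1 - P) * Q) ((A + V) x)‖ + ‖(1 - P) (V (P x))‖ := hsplit ▸ norm_sub_le _ _
    _ ≤ ‖(1 - P) * Q‖ * (r * ‖x‖) + ‖V‖ * ‖P x‖ :=
      add_le_add (ContinuousLinearMap.le_opNorm_of_le _ (hB x hx))
        ((norm_apply_le_of_isStarProjection hP.one_sub _).trans (V.le_opNorm _))
    _ = ‖(1 - P) * Q‖ * r * ‖x‖ + ‖V‖ * ‖P x‖ := by rw [mul_assoc]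

theorem norm_sub_le_sin_arctan_of_norm_sub_lt_one (hP : IsStarProjection P)
    (hQ : IsStarProjection Q) (hPQ : ‖P - Q‖ < 1) (hAP : Commute A P) (hBQ : Commute (A + V) Q)
    (hV : (1 - P) * V * (1 - P) = 0) (hr : 0 ≤ r) (hδ : 0 < δ)
    (hA : ∀ x, P x = 0 → (r + δ) * ‖x‖ ≤ ‖A x‖)
    (hB : ∀ x, Q x = x → ‖(A + V) x‖ ≤ r * ‖x‖) :
    ‖P - Q‖ ≤ Real.sin (Real.arctan (‖V‖ / δ)) := by
  have hnorm := norm_sub_eq_norm_one_sub_mul_of_norm_sub_lt_one hP hQ hPQ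
  rw [hnorm] at hPQ ⊢
  have hmul := mul_norm_one_sub_mul_le_add_sqrt hP hQ (by positivity) (by positivity)
    (norm_nonneg V) fun x hx => mul_norm_sub_apply_le_add hP hAP hBQ hV hA hB hx
  refine le_sin_arctan_div ⟨by linarith [norm_nonneg ((1 - P) * Q)], hPQ⟩ hδ ?_
  linarith

end TanTheta

section Distances

variable {X : Type*} [PseudoMetricSpace X] {K S : Set X}

theorem sInf_image2_dist_le {a b : X} (ha : a ∈ K) (hb : b ∈ S) :
    sInf (Set.image2 dist K S) ≤ dist a b :=
  csInf_le ⟨0, by rintro _ ⟨x, -, y, -, rfl⟩; exact dist_nonneg⟩ (Set.mem_image2_of_mem ha hb)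

theorem sInf_image2_dist_pos (hK : IsCompact K) (hS : IsClosed S) (hKS : Disjoint K S)
    (hKne : K.Nonempty) (hSne : S.Nonempty) :
    0 < sInf (Set.image2 dist K S) := by
  obtain ⟨ε, hε, hlt⟩ := Metric.exists_pos_forall_lt_edist hK hS hKS
  refine lt_of_lt_of_le (NNReal.coe_pos.mpr hε) (le_csInf (hKne.image2 hSne) ?_)
  rintro _ ⟨x, hx, y, hy, rfl⟩
  have hle := (hlt x hx y hy).le
  rw [edist_nndist, ENNReal.coe_le_coe] at hle
  exact_mod_cast hle

theorem dist_sub_le_infDist_of_subset_closedBall {c x : X} {r : ℝ} (hS : S ⊆ closedBall c r)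
    (hne : S.Nonempty) : dist x c - r ≤ infDist x S :=
  (le_infDist hne).mpr fun {y} hy => by
    linarith [dist_triangle x y c, mem_closedBall.mp (hS hy)]

theorem exists_subset_closedBall_and_add_le_infDist {K S O : Set ℝ} {δ : ℝ} (hK : IsCompact K)
    (hKne : K.Nonempty) (hSne : S.Nonempty) (hO : O.OrdConnected) (hKO : K ⊆ O)
    (hOS : Disjoint O S) (hδ : ∀ a ∈ K, ∀ b ∈ S, δ ≤ dist a b) :
    ∃ c r, 0 ≤ r ∧ K ⊆ closedBall c r ∧ r + δ ≤ infDist c S := by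
  obtain ⟨a, haK, ha⟩ := hK.exists_isLeast hKne
  obtain ⟨b, hbK, hb⟩ := hK.exists_isGreatest hKne
  have hab : a ≤ b := ha hbK
  refine ⟨(a + b) / 2, (b - a) / 2, by linarith, ?_, (le_infDist hSne).mpr fun {t} ht => ?_⟩
  · rw [← Real.Icc_eq_closedBall]
    exact fun x hx => ⟨ha hx, hb hx⟩
  have hat := hδ a haK t ht
  have hbt := hδ b hbK t ht
  have htO : t ∉ Set.Icc a b := fun h => hOS.le_bot ⟨hO.out (hKO haK) (hKO hbK) h, ht⟩
  rw [Real.dist_eq] at hat hbt ⊢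
  rcases lt_or_ge t a with hta | hta
  · rw [abs_of_pos (by linarith)] at hat ⊢
    linarith
  · have hbt' : b < t := lt_of_not_ge fun h => htO ⟨hta, h⟩
    rw [abs_of_neg (by linarith)] at hbt ⊢
    linarith

end Distances

namespace IsSpectralMeasure

variable {H : Type*} [NormedAddCommGroup H] [InnerProductSpace ℂ H] [CompleteSpace H]
  {T : H →L[ℂ] H} {E : Set ℝ → H →L[ℂ] H} {Δ Δ₁ Δ₂ : Set ℝ}

theorem isStarProjection (hE : IsSpectralMeasure T E) (hΔ : MeasurableSet Δ) :
    IsStarProjection (E Δ) where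
  isIdempotentElem := by rw [IsIdempotentElem, hE.map_inter Δ Δ hΔ hΔ, Set.inter_self]
  isSelfAdjoint := hE.isSelfAdjoint Δ hΔ

theorem map_empty (hE : IsSpectralMeasure T E) : E ∅ = 0 := by
  ext x
  have hsum := hE.countably_additive (fun _ => ∅) (fun _ => .empty)
    (fun _ _ _ => Set.empty_disjoint _) x
  exact tendsto_nhds_unique tendsto_const_nhds hsum.summable.tendsto_atTop_zero

open Classical in
/-- The vector measure `Δ ↦ E Δ x`, which gives access to the additivity lemmas for vector
measures; as for every vector measure, its value at non-measurable sets is `0`. -/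
noncomputable def vectorMeasure (hE : IsSpectralMeasure T E) (x : H) : VectorMeasure ℝ H where
  measureOf' Δ := if MeasurableSet Δ then E Δ x else 0
  empty' := by simp [hE.map_empty]
  not_measurable' _ hΔ := if_neg hΔ
  m_iUnion' Δ hΔ hdisj := by
    simpa [hΔ, MeasurableSet.iUnion hΔ] using hE.countably_additive Δ hΔ hdisj x

theorem vectorMeasure_apply (hE : IsSpectralMeasure T E) (hΔ : MeasurableSet Δ) (x : H) :
    hE.vectorMeasure x Δ = E Δ x :=
  if_pos hΔ

theorem map_compl (hE : IsSpectralMeasure T E) (hΔ : MeasurableSet Δ) : E Δᶜ = 1 - E Δ := by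
  ext x
  have hadd := (hE.vectorMeasure x).of_add_of_sdiff hΔ .univ (Set.subset_univ Δ)
  rw [← Set.compl_eq_univ_sdiff, hE.vectorMeasure_apply hΔ, hE.vectorMeasure_apply hΔ.compl,
    hE.vectorMeasure_apply .univ, hE.map_univ] at hadd
  exact eq_sub_of_add_eq' hadd

theorem eq_zero_of_subset (hE : IsSpectralMeasure T E) (h₁ : MeasurableSet Δ₁)
    (h₂ : MeasurableSet Δ₂) (hsub : Δ₁ ⊆ Δ₂) (h : E Δ₂ = 0) : E Δ₁ = 0 := by
  rw [← Set.inter_eq_left.mpr hsub, ← hE.map_inter Δ₁ Δ₂ h₁ h₂, h, mul_zero]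

theorem iUnion_eq_zero {ι : Type*} [Countable ι] (hE : IsSpectralMeasure T E) {D : ι → Set ℝ}
    (hD : ∀ i, MeasurableSet (D i)) (h : ∀ i, E (D i) = 0) : E (⋃ i, D i) = 0 := by
  cases isEmpty_or_nonempty ι
  · rw [Set.iUnion_of_empty, hE.map_empty]
  obtain ⟨f, hf⟩ := exists_surjective_nat ι
  have hDf : ∀ n, MeasurableSet ((D ∘ f) n) := fun n => hD (f n)
  have hzero : ∀ n, E (disjointed (D ∘ f) n) = 0 := fun n =>
    hE.eq_zero_of_subset (.disjointed hDf n) (hDf n) (disjointed_subset _ n) (h (f n))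
  ext x
  have hsum := hE.countably_additive _ (.disjointed hDf) (disjoint_disjointed _) x
  simp only [iUnion_disjointed, hzero, zero_apply, Function.comp_apply,
    hf.iUnion_comp] at hsum
  exact hsum.unique hasSum_zero

theorem abs_sub_mul_norm_le_norm_apply_sub_smul (hE : IsSpectralMeasure T E)
    (hΔ : MeasurableSet Δ) (hne : Δ.Nonempty) {c r : ℝ} (hr : 0 ≤ r) (hsub : Δ ⊆ closedBall c r)
    (μ : ℝ) (x : H) :
    (|μ| - r) * ‖x‖ ≤ ‖((T - (c : ℂ) • 1) * E Δ) x - (μ : ℂ) • x‖ := by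
  rcases le_or_gt (|μ| - r) 0 with hμ | hμ
  · exact (mul_nonpos_of_nonpos_of_nonneg hμ (norm_nonneg _)).trans (norm_nonneg _)
  set S := (T - (c : ℂ) • 1) * E Δ
  have hcomm : Commute (S - (μ : ℂ) • 1) (E Δ) :=
    (((hE.commutes Δ hΔ).sub_left ((Commute.one_left _).smul_left _)).mul_left (.refl _)).sub_left
      ((Commute.one_left _).smul_left _)
  have hdist : |μ| - r ≤ infDist (c + μ) Δ := by
    simpa using dist_sub_le_infDist_of_subset_closedBall (x := c + μ) hsub hne
  refine mul_norm_le_norm_apply_of_commute (hE.isStarProjection hΔ) hcomm hμ.le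
    (fun y hy => ?_) (fun y hy => ?_) x
  · calc (|μ| - r) * ‖y‖ ≤ infDist (c + μ) Δ * ‖y‖ := by gcongr
      _ ≤ ‖T y - ((c + μ : ℝ) : ℂ) • y‖ := hE.spectrum_loc Δ hΔ y hy (c + μ)
      _ = ‖(S - (μ : ℂ) • 1) y‖ := by simp [S, hy, add_smul, sub_sub]
  · calc (|μ| - r) * ‖y‖ ≤ |μ| * ‖y‖ := by gcongr; linarith
      _ = ‖(S - (μ : ℂ) • 1) y‖ := by simp [S, hy, norm_smul]

theorem norm_sub_smul_le (hE : IsSpectralMeasure T E) (hT : IsSelfAdjoint T)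
    (hΔ : MeasurableSet Δ) {c r : ℝ} (hr : 0 ≤ r) (hsub : Δ ⊆ closedBall c r) {x : H}
    (hx : E Δ x = x) : ‖T x - (c : ℂ) • x‖ ≤ r * ‖x‖ := by
  rcases Δ.eq_empty_or_nonempty with rfl | hne
  · obtain rfl : 0 = x := by rwa [hE.map_empty, zero_apply] at hx
    simp
  have hTc : IsSelfAdjoint (T - (c : ℂ) • (1 : H →L[ℂ] H)) :=
    hT.sub (.smul (by simp [isSelfAdjoint_iff]) (.one _))
  have hcomm : Commute (T - (c : ℂ) • 1) (E Δ) :=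
    (hE.commutes Δ hΔ).sub_left ((Commute.one_left _).smul_left _)
  have hS := (hTc.commute_iff (hE.isSelfAdjoint Δ hΔ)).mp hcomm
  have hnorm := norm_le_of_isSelfAdjoint_of_mul_norm_le hS hr
    (hE.abs_sub_mul_norm_le_norm_apply_sub_smul hΔ hne hr hsub)
  simpa [hx] using ContinuousLinearMap.le_of_opNorm_le _ hnorm x

theorem exists_pos_closedBall_eq_zero (hE : IsSpectralMeasure T E) (hT : IsSelfAdjoint T) {μ : ℝ}
    (hμ : μ ∉ spectrum ℝ T) : ∃ ε > 0, E (closedBall μ ε) = 0 := by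
  obtain ⟨m, hm, hlow⟩ := exists_pos_mul_norm_le_of_isUnit (spectrum.notMem_iff.mp hμ)
  refine ⟨m / 2, half_pos hm, ContinuousLinearMap.ext fun x => norm_le_zero_iff.mp ?_⟩
  set y := E (closedBall μ (m / 2)) x
  have hup : ‖T y - (μ : ℂ) • y‖ ≤ m / 2 * ‖y‖ :=
    hE.norm_sub_smul_le hT measurableSet_closedBall (half_pos hm).le subset_rfl
      (isStarProjection_apply_apply (hE.isStarProjection measurableSet_closedBall) x)
  have hlow' : m * ‖y‖ ≤ ‖T y - (μ : ℂ) • y‖ := by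
    simpa [norm_sub_rev] using hlow y
  nlinarith

theorem eq_zero_of_disjoint_spectrum (hE : IsSpectralMeasure T E) (hT : IsSelfAdjoint T)
    (hΔ : MeasurableSet Δ) (hdisj : Disjoint Δ (spectrum ℝ T)) : E Δ = 0 := by
  choose! ε hε hzero using fun μ (hμ : μ ∈ Δ) =>
    hE.exists_pos_closedBall_eq_zero hT (Set.disjoint_left.mp hdisj hμ)
  obtain ⟨t, htΔ, htc, hcover⟩ := TopologicalSpace.countable_cover_nhdsWithin
    fun μ hμ => mem_nhdsWithin_of_mem_nhds (closedBall_mem_nhds μ (hε μ hμ))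
  have : Countable t := htc.to_subtype
  rw [Set.biUnion_eq_iUnion] at hcover
  exact hE.eq_zero_of_subset hΔ (.iUnion fun _ => measurableSet_closedBall) hcover
    (hE.iUnion_eq_zero (fun _ => measurableSet_closedBall) fun μ => hzero μ (htΔ μ.2))

theorem map_inter_spectrum (hE : IsSpectralMeasure T E) (hT : IsSelfAdjoint T)
    (hΔ : MeasurableSet Δ) : E (Δ ∩ spectrum ℝ T) = E Δ := by
  have hspec : MeasurableSet (spectrum ℝ T) := (spectrum.isClosed T).measurableSet
  have hone : E (spectrum ℝ T) = 1 := by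
    have hcompl := hE.eq_zero_of_disjoint_spectrum hT hspec.compl disjoint_compl_left
    rwa [hE.map_compl hspec, sub_eq_zero, eq_comm] at hcompl
  rw [← hE.map_inter Δ _ hΔ hspec, hone, mul_one]

theorem map_eq_one_sub_of_spectrum_subset_union (hE : IsSpectralMeasure T E)
    (hT : IsSelfAdjoint T) (h₁ : MeasurableSet Δ₁) (h₂ : MeasurableSet Δ₂)
    (hdisj : Disjoint Δ₁ Δ₂) (hspec : spectrum ℝ T ⊆ Δ₁ ∪ Δ₂) : E Δ₂ = 1 - E Δ₁ := by
  have hinter : Δ₂ ∩ spectrum ℝ T = Δ₁ᶜ ∩ spectrum ℝ T := by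
    ext t
    exact and_congr_left fun ht =>
      ⟨fun ht₂ ht₁ => hdisj.le_bot ⟨ht₁, ht₂⟩, (hspec ht).resolve_left⟩
  rw [← hE.map_inter_spectrum hT h₂, hinter, hE.map_inter_spectrum hT h₁.compl, hE.map_compl h₁]

end IsSpectralMeasure

theorem norm_diff_projections_le_sin_arctan_general {H : Type*} [NormedAddCommGroup H]
    [InnerProductSpace ℂ H] [CompleteSpace H] {A V : H →L[ℂ] H} (hA : IsSelfAdjoint A)
    (hV : IsSelfAdjoint V) {σ Sig : Set ℝ} (hσ : MeasurableSet σ) (hSig : IsClosed Sig)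
    (hSig_nonempty : Sig.Nonempty) (hdisj : Disjoint σ Sig) (hspec : spectrum ℝ A ⊆ σ ∪ Sig)
    {EA EB : Set ℝ → H →L[ℂ] H} (hEA : IsSpectralMeasure A EA)
    (hEB : IsSpectralMeasure (A + V) EB) (hoff : EA Sig * V * EA Sig = 0) {O : Set ℝ}
    (hO : O.OrdConnected) (hO_Sig : Disjoint O Sig) (h_closed : IsClosed (spectrum ℝ (A + V) ∩ O))
    (h_contraction : ‖EA σ - EB O‖ < 1) :
    ‖EA σ - EB O‖ ≤
      Real.sin (Real.arctan (‖V‖ / sInf (Set.image2 dist (spectrum ℝ (A + V) ∩ O) Sig))) := by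
  have hP := hEA.isStarProjection hσ
  have hQ := hEB.isStarProjection hO.measurableSet
  have hEB_eq : EB (spectrum ℝ (A + V) ∩ O) = EB O := by
    rw [Set.inter_comm, hEB.map_inter_spectrum (hA.add hV) hO.measurableSet]
  rcases (spectrum ℝ (A + V) ∩ O).eq_empty_or_nonempty with hempty | hne
  · have hQ₀ : EB O = 0 := by rw [← hEB_eq, hempty, hEB.map_empty]
    rw [norm_sub_eq_norm_one_sub_mul_of_norm_sub_lt_one hP hQ h_contraction, hempty]
    simp [hQ₀]
  have hEA_Sig := hEA.map_eq_one_sub_of_spectrum_subset_union hA hσ hSig.measurableSet hdisj hspec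
  have hcompact := (spectrum.isCompact (A + V)).of_isClosed_subset h_closed Set.inter_subset_left
  have hdist_pos := sInf_image2_dist_pos hcompact hSig (hO_Sig.mono_left Set.inter_subset_right)
    hne hSig_nonempty
  obtain ⟨c, r, hr, hsub, hcr⟩ := exists_subset_closedBall_and_add_le_infDist hcompact hne
    hSig_nonempty hO Set.inter_subset_right hO_Sig fun _ ha _ hb => sInf_image2_dist_le ha hb
  refine norm_sub_le_sin_arctan_of_norm_sub_lt_one (A := A - (c : ℂ) • 1) hP hQ h_contraction
    ?_ ?_ ?_ hr hdist_pos (fun x hx => ?_) fun x hx => ?_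
  · exact (hEA.commutes σ hσ).sub_left ((Commute.one_left _).smul_left _)
  · rw [sub_add_eq_add_sub]
    exact (hEB.commutes O hO.measurableSet).sub_left ((Commute.one_left _).smul_left _)
  · rwa [← hEA_Sig]
  · have hx_Sig : EA Sig x = x := by simp [hEA_Sig, hx]
    calc (r + sInf (Set.image2 dist (spectrum ℝ (A + V) ∩ O) Sig)) * ‖x‖
        ≤ infDist c Sig * ‖x‖ := by gcongr
      _ ≤ ‖A x - (c : ℂ) • x‖ := hEA.spectrum_loc Sig hSig.measurableSet x hx_Sig c
  · rw [sub_add_eq_add_sub]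
    exact hEB.norm_sub_smul_le (hA.add hV) h_closed.measurableSet hr hsub (by rwa [hEB_eq])

/-- **Theorem 2.7 (a generalization of the Davis–Kahan tan Θ theorem).**
Assume the off-diagonal hypotheses and that the convex hull of `σ` does not intersect `Σ`.
Let `O` be an open interval with `O ∩ Σ = ∅` such that `σ̃ = spec(B) ∩ O` is closed.
If `‖E_A(σ) − E_B(O)‖ < 1`, then `‖E_A(σ) − E_B(O)‖ ≤ sin(arctan(‖V‖ / dist(σ̃, Σ)))`. -/
theorem norm_diff_projections_le_sin_arctan
    {H : Type*} [NormedAddCommGroup H] [InnerProductSpace ℂ H] [CompleteSpace H]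
    [TopologicalSpace.SeparableSpace H]
    (A V B : H →L[ℂ] H) (hA : IsSelfAdjoint A) (hV : IsSelfAdjoint V) (hB : B = A + V)
    (σ Sig : Set ℝ) (hσc : IsClosed σ) (hSigc : IsClosed Sig) (hdisj : Disjoint σ Sig)
    (hspec : spectrum ℝ A = σ ∪ Sig)
    (d : ℝ) (hd : d = sInf (Set.image2 dist σ Sig)) (hd0 : 0 < d)
    (EA EB : Set ℝ → H →L[ℂ] H) (hEA : IsSpectralMeasure A EA) (hEB : IsSpectralMeasure B EB)
    (hoff₁ : EA σ * V * EA σ = 0) (hoff₂ : EA Sig * V * EA Sig = 0)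
    (hconv : Disjoint (convexHull ℝ σ) Sig)
    (O : Set ℝ) (hO_open : IsOpen O) (hO_interval : O.OrdConnected)
    (hO_Sig : O ∩ Sig = ∅)
    (h_closed : IsClosed (spectrum ℝ B ∩ O))
    (h_contraction : ‖EA σ - EB O‖ < 1) :
    ‖EA σ - EB O‖ ≤
      Real.sin (Real.arctan (‖V‖ / sInf (Set.image2 dist (spectrum ℝ B ∩ O) Sig))) := by
  have hSig_nonempty : Sig.Nonempty :=
    Set.nonempty_iff_ne_empty.mpr (by rintro rfl; simp [hd] at hd0)
  subst hB
  exact norm_diff_projections_le_sin_arctan_general hA hV hσc.measurableSet hSigc hSig_nonempty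
    hdisj hspec.subset hEA hEB hoff₂ hO_interval (Set.disjoint_iff_inter_eq_empty.mpr hO_Sig)
    h_closed h_contraction
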